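/- Let a < b be real numbers, k ≥ 1 a natural number, s > 0 a scale, and z ∈ ℝ a zero-point. Then ∫_a^b (Q_{s,z}(x) − x)² dx ≥ (b − a)³ / (12 · 4^k). -/

import Mathlib

/-!
Only the number `N = 2 ^ k` of values taken by the quantizer matters. Let `c₀, …, c_{N-1}` be these
values and fix `h ≥ 0`. Writing `B_c(x) = h² - (x - c)²` for `|x - c| < h` and `B_c(x) = 0`
elsewhere, one has pointwise
`(Q x - x)² ≥ h² - ∑ i, B_{cᵢ}(x)`,
because `Q x` is one of the `cᵢ` and every term of the sum is nonnegative. Each bump has total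
integral `4h³/3`, so `∫ (Q x - x)² ≥ h² (b - a) - N · 4h³/3`. The optimal choice
`h = (b - a) / (2N)` turns the right-hand side into `(b - a)³ / (12 N²)`.
-/

/-- The `k`-bit uniform quantizer with scale `s` and zero-point `z`:
`Q_{s,z}(x) = s * (clip(⌊x/s + z⌉, 0, 2^k - 1) - z)`, where `⌊y⌉ = ⌊y + 1/2⌋`. -/
noncomputable def uniformQuant (s z : ℝ) (k : ℕ) (x : ℝ) : ℝ :=
  s * ((↑(max 0 (min (⌊x / s + z + 1/2⌋) ((2 : ℤ) ^ k - 1))) : ℝ) - z)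

/-- The truncated parabola `x ↦ h² - (x - c)²` on `(c - h, c + h]`, extended by zero. -/
noncomputable def parabolaBump (h c : ℝ) : ℝ → ℝ :=
  (Set.Ioc (c - h) (c + h)).indicator fun x => h ^ 2 - (x - c) ^ 2

lemma parabolaBump_nonneg (h c x : ℝ) : 0 ≤ parabolaBump h c x := by
  refine Set.indicator_nonneg (fun y hy => ?_) x
  nlinarith [hy.1, hy.2]

lemma le_parabolaBump {h : ℝ} (hh : 0 ≤ h) (c x : ℝ) :
    h ^ 2 - (c - x) ^ 2 ≤ parabolaBump h c x := by
  unfold parabolaBump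
  by_cases hx : x ∈ Set.Ioc (c - h) (c + h)
  · rw [Set.indicator_of_mem hx]
    exact le_of_eq (by ring)
  · rw [Set.indicator_of_notMem hx]
    rw [Set.mem_Ioc, not_and_or, not_lt, not_le] at hx
    rcases hx with hx | hx <;> nlinarith

lemma intervalIntegrable_parabolaBump (h c a b : ℝ) :
    IntervalIntegrable (parabolaBump h c) MeasureTheory.volume a b := by
  have hc : Continuous fun x : ℝ => h ^ 2 - (x - c) ^ 2 := by fun_prop
  have hi : MeasureTheory.Integrable (parabolaBump h c) :=
    (MeasureTheory.integrable_indicator_iff measurableSet_Ioc).2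
      (hc.integrableOn_Icc.mono_set Set.Ioc_subset_Icc_self)
  exact hi.intervalIntegrable

lemma integral_parabolaBump_le {h : ℝ} (hh : 0 ≤ h) (c : ℝ) {a b : ℝ} (hab : a ≤ b) :
    ∫ x in a..b, parabolaBump h c x ≤ 4 / 3 * h ^ 3 := by
  have hc : Continuous fun x : ℝ => h ^ 2 - (x - c) ^ 2 := by fun_prop
  have htotal : ∫ x in (c - h)..(c + h), (h ^ 2 - (x - c) ^ 2) = 4 / 3 * h ^ 3 := by
    rw [intervalIntegral.integral_comp_sub_right (fun y => h ^ 2 - y ^ 2) c,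
      intervalIntegral.integral_sub (by simp) (by simp)]
    simp only [intervalIntegral.integral_const, integral_pow, smul_eq_mul]
    norm_num
    ring
  rw [← htotal, intervalIntegral.integral_of_le hab,
    intervalIntegral.integral_of_le (by linarith)]
  unfold parabolaBump
  rw [MeasureTheory.setIntegral_indicator measurableSet_Ioc]
  refine MeasureTheory.setIntegral_mono_set
    (hc.integrableOn_Icc.mono_set Set.Ioc_subset_Icc_self) ?_
    (Filter.Eventually.of_forall Set.inter_subset_right)
  filter_upwards [MeasureTheory.ae_restrict_mem measurableSet_Ioc] with x hx
  have h1 := hx.1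
  have h2 := hx.2
  simp only [Pi.zero_apply]
  nlinarith

lemma exists_uniformQuant_eq (s z : ℝ) (k : ℕ) (x : ℝ) :
    ∃ i ∈ Finset.range (2 ^ k), uniformQuant s z k x = s * ((i : ℝ) - z) := by
  have hN : (1 : ℤ) ≤ 2 ^ k := one_le_pow₀ (by norm_num)
  set m : ℤ := max 0 (min (⌊x / s + z + 1/2⌋) ((2 : ℤ) ^ k - 1)) with hm
  have h0 : 0 ≤ m := le_max_left _ _
  have h1 : m ≤ 2 ^ k - 1 := max_le (by linarith) (min_le_right _ _)
  refine ⟨m.toNat, ?_, ?_⟩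
  · rw [Finset.mem_range]
    zify
    rw [Int.toNat_of_nonneg h0]
    linarith
  · have : ((m.toNat : ℕ) : ℝ) = (m : ℝ) := by
      exact_mod_cast congrArg (Int.cast : ℤ → ℝ) (Int.toNat_of_nonneg h0)
    rw [this]
    rfl

lemma measurable_uniformQuant (s z : ℝ) (k : ℕ) : Measurable (uniformQuant s z k) := by
  have hf : Measurable fun x : ℝ => ⌊x / s + z + 1/2⌋ :=
    Int.measurable_floor.comp (by fun_prop)
  have hg : Measurable fun n : ℤ => s * (((max 0 (min n ((2 : ℤ) ^ k - 1)) : ℤ) : ℝ) - z) :=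
    measurable_from_top
  exact hg.comp hf

/-- The quantizer takes finitely many values, so the error is dominated by a finite sum of
squares `(cᵢ - x)²`. -/
lemma intervalIntegrable_error (s z : ℝ) (k : ℕ) (a b : ℝ) :
    IntervalIntegrable (fun x => (uniformQuant s z k x - x) ^ 2) MeasureTheory.volume a b := by
  have hc : Continuous fun x : ℝ => ∑ i ∈ Finset.range (2 ^ k), (s * ((i : ℝ) - z) - x) ^ 2 := by
    fun_prop
  refine (hc.intervalIntegrable a b).mono_fun
    (((measurable_uniformQuant s z k).sub measurable_id).pow_const 2).aestronglyMeasurable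
    (Filter.Eventually.of_forall fun x => ?_)
  obtain ⟨i, hi, hx⟩ := exists_uniformQuant_eq s z k x
  have hle := Finset.single_le_sum
    (f := fun i : ℕ => (s * ((i : ℝ) - z) - x) ^ 2) (fun j _ => sq_nonneg _) hi
  simp only [Real.norm_eq_abs]
  rw [abs_of_nonneg (sq_nonneg _), hx]
  exact hle.trans (le_abs_self _)

/-- Lower bound on the squared error of any `k`-bit uniform quantizer over `[a,b]`. -/
theorem uniformQuant_error_lower_bound (a b : ℝ) (hab : a < b) (k : ℕ) (hk : 1 ≤ k)
    (s : ℝ) (hs : 0 < s) (z : ℝ) :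
    (b - a) ^ 3 / (12 * 4 ^ k) ≤ ∫ x in a..b, (uniformQuant s z k x - x) ^ 2 := by
  have hN : (0 : ℝ) < 2 ^ k := by positivity
  have h4 : (4 : ℝ) ^ k = (2 ^ k) ^ 2 := by
    rw [← pow_mul, mul_comm, pow_mul]
    norm_num
  -- `h` maximizes the lower bound `h² (b - a) - 2 ^ k * (4 h³ / 3)`.
  obtain ⟨h, hh⟩ : ∃ h : ℝ, h = (b - a) / (2 * 2 ^ k) := ⟨_, rfl⟩
  have hpos : 0 ≤ h := by
    rw [hh]
    exact div_nonneg (by linarith) (by positivity)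
  have hsum : IntervalIntegrable
      (fun x => ∑ i ∈ Finset.range (2 ^ k), parabolaBump h (s * ((i : ℝ) - z)) x)
      MeasureTheory.volume a b := by
    have := IntervalIntegrable.sum (Finset.range (2 ^ k))
      (f := fun i : ℕ => parabolaBump h (s * ((i : ℝ) - z)))
      (fun i _ => intervalIntegrable_parabolaBump h (s * ((i : ℝ) - z)) a b)
    simpa only [Finset.sum_fn] using this
  have hmono : ∫ x in a..b,
        (h ^ 2 - ∑ i ∈ Finset.range (2 ^ k), parabolaBump h (s * ((i : ℝ) - z)) x) ≤
      ∫ x in a..b, (uniformQuant s z k x - x) ^ 2 := by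
    refine intervalIntegral.integral_mono_on hab.le (intervalIntegrable_const.sub hsum)
      (intervalIntegrable_error s z k a b) fun x _ => ?_
    obtain ⟨i, hi, hx⟩ := exists_uniformQuant_eq s z k x
    have hle := Finset.single_le_sum (f := fun i : ℕ => parabolaBump h (s * ((i : ℝ) - z)) x)
      (fun j _ => parabolaBump_nonneg _ _ _) hi
    have hb := le_parabolaBump hpos (s * ((i : ℝ) - z)) x
    rw [hx]
    linarith
  have hbumps : ∑ i ∈ Finset.range (2 ^ k), ∫ x in a..b, parabolaBump h (s * ((i : ℝ) - z)) x ≤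
      2 ^ k * (4 / 3 * h ^ 3) := by
    refine (Finset.sum_le_sum fun (i : ℕ) _ =>
      integral_parabolaBump_le hpos (s * ((i : ℝ) - z)) hab.le).trans_eq ?_
    simp
  rw [intervalIntegral.integral_sub intervalIntegrable_const hsum,
    intervalIntegral.integral_finsetSum
      (fun (i : ℕ) _ => intervalIntegrable_parabolaBump h (s * ((i : ℝ) - z)) a b),
    intervalIntegral.integral_const, smul_eq_mul] at hmono
  have hval : (b - a) ^ 3 / (12 * 4 ^ k) = (b - a) * h ^ 2 - 2 ^ k * (4 / 3 * h ^ 3) := by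
    rw [h4, hh]
    field_simp
    ring
  linarith
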